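/- arXiv:1512.01150 — 9 statements merged into one kernel-verified Lean document; each statement's English description precedes it below -/
import Mathlib

section
/- Let S be a binary matrix with n pairwise distinct rows and d columns, and let j be an inessential column of S. Then for every natural number k, S has a distinguishing set of size at most k if and only if the matrix obtained from S by deleting column j (whose rows are pairwise distinct by the definition of inessential) has a distinguishing set of size at most k. -/
/-!
A distinguishing set of the reduced matrix is also one of `S`. Conversely, let `K` distinguish
the rows of `S` and let `j` single out the row `i`. If `j ∉ K` there is nothing to do. Otherwise
`K \ {j}` still separates all rows other than `i` from each other, since column `j` is constant on
them. Hence at most one row `l ≠ i` agrees with `i` on `K \ {j}`; if there is one, a column `c ≠ j`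
separating `i` from `l` replaces `j`, and the size does not grow.
-/

/-- A set `K` of column indices is a distinguishing set for the matrix `S`
if every pair of distinct rows differs in some column of `K`. -/
def Distinguishes {n : ℕ} {κ α : Type*} (S : Fin n → κ → α) (K : Finset κ) : Prop :=
  ∀ i j : Fin n, i ≠ j → ∃ c ∈ K, S i c ≠ S j c

/-- A column `j` of a binary matrix is inessential if (1) it exactly distinguishes
some row `i` from all other rows, and (2) the rows remain pairwise distinct after
deleting column `j`. -/
def Inessential {n d : ℕ} (S : Fin n → Fin d → Bool) (j : Fin d) : Prop :=
  (∃ i : Fin n, (∀ l, l ≠ i → S i j ≠ S l j) ∧ ∀ l l', l ≠ i → l' ≠ i → S l j = S l' j) ∧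
  (∀ i i' : Fin n, i ≠ i' → ∃ c : Fin d, c ≠ j ∧ S i c ≠ S i' c)

/-- To distinguish all rows it suffices to separate `i` from every other row, and the rows other
than `i` from each other. -/
lemma Distinguishes.of_row {n : ℕ} {κ α : Type*} {S : Fin n → κ → α} {K : Finset κ} (i : Fin n)
    (hi : ∀ b, b ≠ i → ∃ c ∈ K, S i c ≠ S b c)
    (ho : ∀ a b, a ≠ i → b ≠ i → a ≠ b → ∃ c ∈ K, S a c ≠ S b c) : Distinguishes S K := by
  intro a b hab
  by_cases ha : a = i
  · subst ha
    exact hi b hab.symm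
  by_cases hb : b = i
  · subst hb
    obtain ⟨c, hc, h⟩ := hi a hab
    exact ⟨c, hc, h.symm⟩
  exact ho a b ha hb hab

theorem stmt0 {n d : ℕ} (S : Fin n → Fin d → Bool)
    (hrows : ∀ i i' : Fin n, i ≠ i' → S i ≠ S i')
    (j : Fin d) (hj : Inessential S j) (k : ℕ) :
    (∃ K : Finset (Fin d), K.card ≤ k ∧ Distinguishes S K) ↔
    (∃ K : Finset {c : Fin d // c ≠ j}, K.card ≤ k ∧
      Distinguishes (fun i (c : {c : Fin d // c ≠ j}) => S i c.val) K) := by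
  constructor
  · rintro ⟨K, hk, hK⟩
    obtain ⟨⟨i, -, hconst⟩, hdist⟩ := hj
    have hcard : (K.subtype (· ≠ j)).card = (K.erase j).card := by
      rw [Finset.card_subtype, Finset.filter_ne']
    by_cases hjK : j ∈ K
    · have ho : ∀ a b, a ≠ i → b ≠ i → a ≠ b →
          ∃ c ∈ K.subtype (· ≠ j), S a c.val ≠ S b c.val := by
        intro a b ha hb hab
        obtain ⟨c, hc, h⟩ := hK a b hab
        have hcj : c ≠ j := by
          rintro rfl
          exact h (hconst a b ha hb)
        exact ⟨⟨c, hcj⟩, by simpa using hc, h⟩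
      have hlt := Finset.card_erase_lt_of_mem hjK
      by_cases hl : ∃ l, l ≠ i ∧ ∀ c ∈ K.subtype (· ≠ j), S i c.val = S l c.val
      · obtain ⟨l, hli, hl⟩ := hl
        obtain ⟨c, hcj, hc⟩ := hdist i l hli.symm
        refine ⟨insert ⟨c, hcj⟩ (K.subtype (· ≠ j)), ?_, .of_row i ?_ ?_⟩
        · have := Finset.card_insert_le (⟨c, hcj⟩ : {c : Fin d // c ≠ j}) (K.subtype (· ≠ j))
          omega
        · intro b hb
          by_cases hbl : b = l
          · subst hbl
            exact ⟨_, Finset.mem_insert_self _ _, hc⟩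
          -- A column of `K \ {j}` separating `l` from `b` also separates `i` from `b`.
          · obtain ⟨e, he, h⟩ := ho l b hli hb (Ne.symm hbl)
            exact ⟨e, Finset.mem_insert_of_mem he, by rwa [← hl e he] at h⟩
        · intro a b ha hb hab
          obtain ⟨e, he, h⟩ := ho a b ha hb hab
          exact ⟨e, Finset.mem_insert_of_mem he, h⟩
      · push Not at hl
        exact ⟨K.subtype (· ≠ j), by omega, .of_row i hl ho⟩
    · refine ⟨K.subtype (· ≠ j), by rwa [hcard, Finset.erase_eq_of_notMem hjK], ?_⟩
      intro a b hab
      obtain ⟨c, hc, h⟩ := hK a b hab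
      exact ⟨⟨c, fun hcj => hjK (hcj ▸ hc)⟩, by simpa using hc, h⟩
  · rintro ⟨K, hk, hK⟩
    refine ⟨K.map (Function.Embedding.subtype _), by simpa using hk, ?_⟩
    intro a b hab
    obtain ⟨c, hc, h⟩ := hK a b hab
    exact ⟨c.val, Finset.mem_map_of_mem _ hc, h⟩
end

section
/- Let S be a binary matrix with n ≥ 2 pairwise distinct rows and d columns, and let S' be the n × (d+1) matrix obtained from S by appending one new column that has exactly one 1-entry or exactly one 0-entry (i.e., a column of weight 1 or of weight n−1). Then for every natural number k, S' has a distinguishing set of size at most k if and only if S has a distinguishing set of size at most k. -/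
/-- A column of weight `1` or `n - 1` is constant off one row. -/
lemma exists_constant_off {n : ℕ} (hn : 2 ≤ n) (v : Fin n → Bool)
    (hv : (Finset.univ.filter fun i => v i = true).card = 1 ∨
          (Finset.univ.filter fun i => v i = true).card = n - 1) :
    ∃ r, ∀ i j, i ≠ r → j ≠ r → v i = v j := by
  have key : ∀ b : Bool, (Finset.univ.filter fun i => v i = b).card = 1 →
      ∃ r, ∀ i j, i ≠ r → j ≠ r → v i = v j := by
    intro b hb
    obtain ⟨r, hr⟩ := Finset.card_eq_one.mp hb
    refine ⟨r, fun i j hi hj => ?_⟩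
    have h (x : Fin n) (hx : x ≠ r) : v x ≠ b := fun hxb => by
      have : x ∈ Finset.univ.filter fun i => v i = b := by simp [hxb]
      rw [hr] at this
      exact hx (Finset.mem_singleton.mp this)
    rw [Bool.eq_not_of_ne (h i hi), Bool.eq_not_of_ne (h j hj)]
  rcases hv with h | h
  · exact key true h
  · apply key false
    have := Finset.card_filter_add_card_filter_not (s := Finset.univ) (fun i => v i = true)
    simp only [Bool.not_eq_true, Finset.card_univ, Fintype.card_fin] at this
    omega

/-- If `K` distinguishes all rows other than `r`, one further column suffices for all rows. -/
lemma exists_distinguishes_card_le_succ {n d : ℕ} (S : Fin n → Fin d → Bool)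
    (hrows : ∀ i i' : Fin n, i ≠ i' → S i ≠ S i') (r : Fin n) (K : Finset (Fin d))
    (hK : ∀ i j, i ≠ r → j ≠ r → i ≠ j → ∃ c ∈ K, S i c ≠ S j c) :
    ∃ L : Finset (Fin d), L.card ≤ K.card + 1 ∧ Distinguishes S L := by
  by_cases h : ∃ s, s ≠ r ∧ ∀ c ∈ K, S s c = S r c
  · obtain ⟨s, hsr, hs⟩ := h
    obtain ⟨c₀, hc₀⟩ := Function.ne_iff.mp (hrows s r hsr)
    refine ⟨insert c₀ K, Finset.card_insert_le _ _, ?_⟩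
    have hr : ∀ j, j ≠ r → ∃ c ∈ insert c₀ K, S j c ≠ S r c := by
      intro j hj
      by_cases hjs : j = s
      · exact ⟨c₀, Finset.mem_insert_self _ _, hjs ▸ hc₀⟩
      · obtain ⟨c, hc, hne⟩ := hK j s hj hsr hjs
        exact ⟨c, Finset.mem_insert_of_mem hc, hs c hc ▸ hne⟩
    intro i j hij
    by_cases hi : i = r
    · subst hi
      obtain ⟨c, hc, hne⟩ := hr j hij.symm
      exact ⟨c, hc, hne.symm⟩
    · by_cases hj : j = r
      · subst hj
        exact hr i hi
      · obtain ⟨c, hc, hne⟩ := hK i j hi hj hij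
        exact ⟨c, Finset.mem_insert_of_mem hc, hne⟩
  · push Not at h
    refine ⟨K, Nat.le_succ _, fun i j hij => ?_⟩
    by_cases hi : i = r
    · subst hi
      obtain ⟨c, hc, hne⟩ := h j hij.symm
      exact ⟨c, hc, hne.symm⟩
    · by_cases hj : j = r
      · subst hj
        exact h i hi
      · exact hK i j hi hj hij

theorem stmt1 {n d : ℕ} (hn : 2 ≤ n) (S : Fin n → Fin d → Bool)
    (hrows : ∀ i i' : Fin n, i ≠ i' → S i ≠ S i')
    (v : Fin n → Bool)
    (hv : (Finset.univ.filter fun i => v i = true).card = 1 ∨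
          (Finset.univ.filter fun i => v i = true).card = n - 1) (k : ℕ) :
    (∃ K : Finset (Fin (d + 1)), K.card ≤ k ∧
        Distinguishes (fun i => Fin.snoc (S i) (v i)) K) ↔
    (∃ K : Finset (Fin d), K.card ≤ k ∧ Distinguishes S K) := by
  constructor
  · rintro ⟨K', hcard, hK'⟩
    let K : Finset (Fin d) := Finset.univ.filter fun c => c.castSucc ∈ K'
    have hsub : K.map Fin.castSuccEmb ⊆ K' := by
      intro x hx
      obtain ⟨c, hc, rfl⟩ := Finset.mem_map.mp hx
      exact (Finset.mem_filter.mp hc).2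
    -- A pair of rows is separated by `K` unless the new column is in `K'` and separates it.
    have hsep : ∀ i j, i ≠ j →
        (∃ c ∈ K, S i c ≠ S j c) ∨ (Fin.last d ∈ K' ∧ v i ≠ v j) := by
      intro i j hij
      obtain ⟨c, hc, hne⟩ := hK' i j hij
      induction c using Fin.lastCases with
      | last => exact Or.inr ⟨hc, by simpa using hne⟩
      | cast c => exact Or.inl ⟨c, by simp [K, hc], by simpa using hne⟩
    by_cases hlast : Fin.last d ∈ K'
    · obtain ⟨r, hr⟩ := exists_constant_off hn v hv
      obtain ⟨L, hL, hLS⟩ := exists_distinguishes_card_le_succ S hrows r K fun i j hi hj hij =>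
        (hsep i j hij).resolve_right fun h => h.2 (hr i j hi hj)
      refine ⟨L, ?_, hLS⟩
      have hlt : (K.map Fin.castSuccEmb).card < K'.card := by
        refine Finset.card_lt_card (Finset.ssubset_iff_of_subset hsub |>.mpr ⟨_, hlast, ?_⟩)
        simp
      rw [Finset.card_map] at hlt
      omega
    · refine ⟨K, ?_, fun i j hij => (hsep i j hij).resolve_right fun h => hlast h.1⟩
      have hle := Finset.card_le_card hsub
      rw [Finset.card_map] at hle
      omega
  · rintro ⟨K, hcard, hK⟩
    refine ⟨K.map Fin.castSuccEmb, by simpa using hcard, fun i j hij => ?_⟩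
    obtain ⟨c, hc, hne⟩ := hK i j hij
    exact ⟨c.castSucc, by simpa using hc, by simpa using hne⟩
end

section
/- Let G be a simple graph on vertex set V with |V| = n and edge set E with |E| = m, and let k ≤ n be a natural number. Let S be the binary matrix with m+1 rows and n columns whose first m rows are the incidence vectors of the edges of G (row e has a 1 exactly at the two endpoints of edge e) and whose last row is the all-zero vector. Then G has a distance-3 independent set of size at least k if and only if S has a distinguishing set of size at most n − k. -/
/-- The right-hand side says that the complement of `K` is a distance-3 independent set. -/
lemma distinguishes_iff_compl_independent {n m : ℕ} (G : SimpleGraph (Fin n))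
    (e : Fin m ≃ G.edgeSet) (S : Fin (m + 1) → Fin n → Bool)
    (hS : ∀ (i : Fin m) (c : Fin n),
      S i.castSucc c = true ↔ c ∈ ((e i : G.edgeSet) : Sym2 (Fin n)))
    (hlast : ∀ c, S (Fin.last m) c = false) (K : Finset (Fin n)) :
    Distinguishes S K ↔
      ∀ u ∉ K, ∀ v ∉ K, u ≠ v → ¬ G.Adj u v ∧ ∀ w, ¬ (G.Adj u w ∧ G.Adj w v) := by
  have row_of_adj : ∀ a b, G.Adj a b →
      ∃ i : Fin m, ∀ c, S i.castSucc c = true ↔ c = a ∨ c = b := by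
    intro a b h
    refine ⟨e.symm ⟨s(a, b), h⟩, fun c => ?_⟩
    rw [hS, Equiv.apply_symm_apply, Sym2.mem_iff]
  have adj_of_row : ∀ i : Fin m, ∃ a b, G.Adj a b ∧ (e i : Sym2 (Fin n)) = s(a, b) ∧
      ∀ c, S i.castSucc c = true ↔ c = a ∨ c = b := by
    intro i
    obtain ⟨a, b, hab⟩ : ∃ a b, (e i : Sym2 (Fin n)) = s(a, b) :=
      Sym2.ind (f := fun z => ∃ a b, z = s(a, b)) (fun a b => ⟨a, b, rfl⟩) _
    refine ⟨a, b, ?_, hab, fun c => by rw [hS, hab, Sym2.mem_iff]⟩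
    have h := (e i).2
    rwa [hab, SimpleGraph.mem_edgeSet] at h
  constructor
  · intro hK u hu v hv huv
    refine ⟨fun hadj => ?_, fun w ⟨huw, hwv⟩ => ?_⟩
    · obtain ⟨i, hi⟩ := row_of_adj u v hadj
      obtain ⟨c, hc, hne⟩ := hK i.castSucc (Fin.last m) (Fin.castSucc_lt_last i).ne
      rw [hlast, ne_eq, Bool.not_eq_false, hi] at hne
      rcases hne with rfl | rfl <;> contradiction
    · obtain ⟨i, hi⟩ := row_of_adj u w huw
      obtain ⟨j, hj⟩ := row_of_adj w v hwv
      -- The rows of `uw` and `wv` are distinct because the latter vanishes at `u`.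
      have hij : i.castSucc ≠ j.castSucc := by
        intro h
        have h1 := (hi u).2 (Or.inl rfl)
        rw [h, hj] at h1
        exact h1.elim huw.ne huv
      obtain ⟨c, hc, hne⟩ := hK _ _ hij
      refine hne (Bool.eq_iff_iff.2 ?_)
      rw [hi, hj]
      have hcu : c ≠ u := fun h => hu (h ▸ hc)
      have hcv : c ≠ v := fun h => hv (h ▸ hc)
      simp [hcu, hcv]
  · intro hI
    have edge_ne_zero : ∀ i : Fin m, ∃ c ∈ K, S i.castSucc c = true := by
      intro i
      obtain ⟨a, b, hadj, -, hab⟩ := adj_of_row i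
      by_contra! h
      exact (hI a (fun ha => h a ha ((hab a).2 (Or.inl rfl)))
        b (fun hb => h b hb ((hab b).2 (Or.inr rfl))) hadj.ne).1 hadj
    intro i j hij
    induction i using Fin.lastCases with
    | last =>
      induction j using Fin.lastCases with
      | last => exact absurd rfl hij
      | cast j =>
        obtain ⟨c, hc, h⟩ := edge_ne_zero j
        exact ⟨c, hc, by simp [hlast, h]⟩
    | cast i =>
      induction j using Fin.lastCases with
      | last =>
        obtain ⟨c, hc, h⟩ := edge_ne_zero i
        exact ⟨c, hc, by simp [hlast, h]⟩
      | cast j =>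
        by_contra! h
        -- Row `i` has a nonzero entry in `K`, where row `j` agrees with it, so the two edges
        -- share a vertex `w ∈ K`; their other endpoints are the forbidden pair.
        obtain ⟨w, hw, hiw⟩ := edge_ne_zero i
        have hjw : S j.castSucc w = true := by rw [← h w hw, hiw]
        have other : ∀ l : Fin m, S l.castSucc w = true → ∃ x, G.Adj w x ∧
            (e l : Sym2 (Fin n)) = s(w, x) ∧ ∀ c, S l.castSucc c = true ↔ c = w ∨ c = x := by
          intro l hl
          obtain ⟨a, b, hadj, hab, hrow⟩ := adj_of_row l
          rcases (hrow w).1 hl with rfl | rfl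
          · exact ⟨b, hadj, hab, hrow⟩
          · exact ⟨a, hadj.symm, hab.trans Sym2.eq_swap, fun c => (hrow c).trans or_comm⟩
        obtain ⟨u, hwu, heu, hu⟩ := other i hiw
        obtain ⟨v, hwv, hev, hv⟩ := other j hjw
        have huv : u ≠ v := by
          rintro rfl
          exact hij (congrArg Fin.castSucc (e.injective (Subtype.ext (heu.trans hev.symm))))
        have huK : u ∉ K := by
          intro hmem
          have h1 := (hu u).2 (Or.inr rfl)
          rw [h u hmem, hv] at h1
          exact h1.elim hwu.ne' huv
        have hvK : v ∉ K := by
          intro hmem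
          have h1 := (hv v).2 (Or.inr rfl)
          rw [← h v hmem, hu] at h1
          exact h1.elim hwv.ne' huv.symm
        exact (hI u huK v hvK huv).2 w ⟨hwu.symm, hwv⟩

theorem stmt2 {n m : ℕ} (G : SimpleGraph (Fin n)) (e : Fin m ≃ G.edgeSet)
    (k : ℕ) (hk : k ≤ n)
    (S : Fin (m + 1) → Fin n → Bool)
    (hS : ∀ (i : Fin m) (c : Fin n),
      S i.castSucc c = true ↔ c ∈ ((e i : G.edgeSet) : Sym2 (Fin n)))
    (hlast : ∀ c, S (Fin.last m) c = false) :
    (∃ I : Finset (Fin n), k ≤ I.card ∧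
        ∀ u ∈ I, ∀ v ∈ I, u ≠ v → ¬ G.Adj u v ∧ ∀ w, ¬ (G.Adj u w ∧ G.Adj w v)) ↔
    (∃ K : Finset (Fin n), K.card ≤ n - k ∧ Distinguishes S K) := by
  have key := distinguishes_iff_compl_independent G e S hS hlast
  constructor
  · rintro ⟨I, hcard, hI⟩
    refine ⟨Iᶜ, ?_, (key _).2 ?_⟩
    · rw [Finset.card_compl, Fintype.card_fin]
      omega
    · simpa only [Finset.mem_compl, not_not] using hI
  · rintro ⟨K, hcard, hK⟩
    refine ⟨Kᶜ, ?_, ?_⟩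
    · rw [Finset.card_compl, Fintype.card_fin]
      omega
    · simpa only [Finset.mem_compl] using (key K).1 hK
end

section
/- Let S be a binary matrix with n ≥ 2 pairwise distinct rows and d columns whose n-th row is the all-zero vector, and suppose the family F = {W_1, …, W_{n−1}} of supports of the nonzero rows is a sunflower with core C (the sets W_i are pairwise distinct since the rows are distinct, so |F| = n−1). Then: (i) for every natural number k, S has a distinguishing set of size at most k if and only if k ≥ n−1; and (ii) every distinguishing set of S intersects all but at most one of the petals W_i ∖ C. -/
/-- The support of row `i`: the set of columns where the binary matrix `S` has a 1. -/
def rowSupport {n d : ℕ} (S : Fin n → Fin d → Bool) (i : Fin n) : Finset (Fin d) :=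
  Finset.univ.filter fun c => S i c = true

lemma mem_rowSupport {n d : ℕ} {S : Fin n → Fin d → Bool} {i : Fin n} {c : Fin d} :
    c ∈ rowSupport S i ↔ S i c = true := by
  simp [rowSupport]

lemma petal_meets {n d : ℕ} (hn : 1 ≤ n) {S : Fin (n + 1) → Fin d → Bool} {C : Finset (Fin d)}
    (hsun : ∀ i j : Fin n, i ≠ j →
      rowSupport S i.castSucc ∩ rowSupport S j.castSucc = C)
    {K : Finset (Fin d)} (hK : Distinguishes S K) :
    ∃ i₀ : Fin n, ∀ i : Fin n, i ≠ i₀ →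
      ((rowSupport S i.castSucc \ C) ∩ K).Nonempty := by
  by_contra! h
  obtain ⟨i, -, hi⟩ := h ⟨0, hn⟩
  obtain ⟨j, hji, hj⟩ := h i
  obtain ⟨c, hcK, hc⟩ := hK i.castSucc j.castSucc (by simpa using hji.symm)
  have hC : c ∈ C ↔ S i.castSucc c = true ∧ S j.castSucc c = true := by
    rw [← hsun i j hji.symm, Finset.mem_inter, mem_rowSupport, mem_rowSupport]
  have hi' : c ∉ (rowSupport S i.castSucc \ C) ∩ K := by simp [hi]
  have hj' : c ∉ (rowSupport S j.castSucc \ C) ∩ K := by simp [hj]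
  simp only [Finset.mem_inter, Finset.mem_sdiff, mem_rowSupport, hC] at hi' hj'
  cases h1 : S i.castSucc c <;> cases h2 : S j.castSucc c <;> simp_all

lemma exists_transversal {n d : ℕ} (hn : 1 ≤ n) {S : Fin (n + 1) → Fin d → Bool}
    (hzero : ∀ c, S (Fin.last n) c = false) {C : Finset (Fin d)}
    (hsun : ∀ i j : Fin n, i ≠ j →
      rowSupport S i.castSucc ∩ rowSupport S j.castSucc = C)
    {K : Finset (Fin d)} (hK : Distinguishes S K) :
    ∃ f : Fin n → Fin d, Function.Injective f ∧ (∀ i, f i ∈ K) ∧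
      Distinguishes S (Finset.univ.image f) := by
  obtain ⟨i₀, h₀⟩ := petal_meets hn hsun hK
  have hex : ∀ i : Fin n, ∃ c ∈ K, S i.castSucc c = true ∧ (i ≠ i₀ → c ∉ C) := by
    intro i
    by_cases hi : i = i₀
    · obtain ⟨c, hcK, hc⟩ := hK i.castSucc (Fin.last n) (Fin.castSucc_lt_last i).ne
      exact ⟨c, hcK, by simpa [hzero] using hc, fun h => absurd hi h⟩
    · obtain ⟨c, hc⟩ := h₀ i hi
      simp only [Finset.mem_inter, Finset.mem_sdiff, mem_rowSupport] at hc
      exact ⟨c, hc.2, hc.1.1, fun _ => hc.1.2⟩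
  choose f hfK hfS hfC using hex
  -- Away from the exceptional index, `f i` is a petal element, so row `i` alone contains it.
  have hpetal : ∀ i j : Fin n, i ≠ j → i ≠ i₀ → S j.castSucc (f i) = false := by
    intro i j hij hi
    by_contra hc
    apply hfC i hi
    rw [← hsun i j hij, Finset.mem_inter, mem_rowSupport, mem_rowSupport]
    exact ⟨hfS i, by simpa using hc⟩
  have hmem : ∀ i, f i ∈ Finset.univ.image f := fun i =>
    Finset.mem_image_of_mem f (Finset.mem_univ i)
  have hone : ∀ i j : Fin n, i ≠ j → i ≠ i₀ ∨ j ≠ i₀ := by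
    intro i j hij
    by_contra! h
    exact hij (h.1.trans h.2.symm)
  refine ⟨f, ?_, hfK, ?_⟩
  · intro i j hf
    by_contra hij
    rcases hone i j hij with h | h
    · have := hpetal i j hij h
      rw [hf, hfS j] at this
      cases this
    · have := hpetal j i (Ne.symm hij) h
      rw [← hf, hfS i] at this
      cases this
  · intro i j hij
    induction i using Fin.lastCases with
    | last =>
      induction j using Fin.lastCases with
      | last => exact absurd rfl hij
      | cast j => exact ⟨f j, hmem j, by simp [hzero, hfS]⟩
    | cast i =>
      induction j using Fin.lastCases with
      | last => exact ⟨f i, hmem i, by simp [hzero, hfS]⟩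
      | cast j =>
        have hij' : i ≠ j := fun h => hij (by rw [h])
        rcases hone i j hij' with h | h
        · exact ⟨f i, hmem i, by simp [hfS i, hpetal i j hij' h]⟩
        · exact ⟨f j, hmem j, by simp [hfS j, hpetal j i hij'.symm h]⟩

theorem stmt4 {n d : ℕ} (hn : 1 ≤ n) (S : Fin (n + 1) → Fin d → Bool)
    (hrows : ∀ i j : Fin (n + 1), i ≠ j → S i ≠ S j)
    (hzero : ∀ c, S (Fin.last n) c = false)
    (C : Finset (Fin d))
    (hsun : ∀ i j : Fin n, i ≠ j →
      rowSupport S i.castSucc ∩ rowSupport S j.castSucc = C) :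
    (∀ k : ℕ, (∃ K : Finset (Fin d), K.card ≤ k ∧ Distinguishes S K) ↔ n ≤ k) ∧
    (∀ K : Finset (Fin d), Distinguishes S K →
      ∃ i₀ : Fin n, ∀ i : Fin n, i ≠ i₀ →
        ((rowSupport S i.castSucc \ C) ∩ K).Nonempty) := by
  refine ⟨fun k => ⟨?_, fun hk => ?_⟩, fun K hK => petal_meets hn hsun hK⟩
  · rintro ⟨K, hKk, hK⟩
    obtain ⟨f, hinj, hfK, -⟩ := exists_transversal hn hzero hsun hK
    refine le_trans ?_ hKk
    simpa using Finset.card_le_card_of_injOn (s := Finset.univ) f (fun i _ => hfK i) hinj.injOn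
  · have huniv : Distinguishes S Finset.univ := fun i j hij =>
      (Function.ne_iff.mp (hrows i j hij)).imp fun c hc => ⟨Finset.mem_univ c, hc⟩
    obtain ⟨f, -, -, hf⟩ := exists_transversal hn hzero hsun huniv
    exact ⟨_, Finset.card_image_le.trans (by simpa using hk), hf⟩
end

section
/- Let F be an s-uniform weak Δ-system, i.e., a family of pairwise distinct finite sets each of cardinality exactly s such that there is λ ∈ ℕ with |A ∩ B| = λ for all distinct A, B ∈ F. If |F| ≥ s² − s + 2, then F is a sunflower: there exists a set C with A ∩ B = C for all distinct A, B ∈ F. -/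
/-!
This is Deza's theorem. Put `m = |F|`, `k = s - λ`, and let `d x` be the number of members of `F`
containing `x`. Double counting inside a member `A` gives `∑ x ∈ A, (d x - 1) = λ (m - 1)`
(`sum_deg`).

* If `λ = 0`, all intersections are empty.
* If `λ = 1`, the count yields a point `x ∈ A` with `d x > s`. A member missing `x` would have to
  meet the more than `s` members through `x` in distinct points, so every member contains `x`.
* If `λ ≥ 2`, the Gram matrix of the indicator vectors is `k I + λ J`. Evaluating its quadratic form
  on the weights `m - d` (members through `x`) and `-d` (the others), which sum to zero, and
  comparing with the `x`-coordinate alone gives `d (m - d) ≤ k m` (`deg_mul_le`). As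
  `m > (k + 1) ^ 2`, this forces `d ≤ k` or `d ≥ m - k`. Let `C` be the set of points with
  `d ≥ m - k`. The count shows that each member contains at least `λ` points of `C`. On the other
  hand `λ + 1` points of `C` would lie together in at least `m - (λ + 1) k ≥ 2` members, so
  `|C| ≤ λ`. Hence `C` is contained in every member and is the common intersection.
-/

/-- The number of members of `F` containing `x`. -/
def deg {α : Type*} [DecidableEq α] (F : Finset (Finset α)) (x : α) : ℕ :=
  (F.filter (fun A => x ∈ A)).card

theorem sum_deg {α : Type*} [DecidableEq α] (s lam : ℕ) (F : Finset (Finset α))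
    (huniform : ∀ A ∈ F, A.card = s)
    (hlam : ∀ A ∈ F, ∀ B ∈ F, A ≠ B → (A ∩ B).card = lam)
    (A : Finset α) (hA : A ∈ F) :
    ∑ x ∈ A, deg F x = s + lam * (F.card - 1) := by
  have h1 : ∑ x ∈ A, deg F x = ∑ B ∈ F, (A ∩ B).card := by
    simp only [deg, Finset.card_filter]
    rw [Finset.sum_comm]
    refine Finset.sum_congr rfl fun B _ => ?_
    rw [← Finset.card_filter, Finset.filter_mem_eq_inter]
  rw [h1, ← Finset.add_sum_erase _ _ hA, Finset.inter_self, huniform A hA,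
    Finset.sum_congr rfl (g := fun _ => lam)]
  · simp [Finset.card_erase_of_mem hA, mul_comm]
  · intro B hB
    rw [Finset.mem_erase] at hB
    exact hlam A hA B hB.2 hB.1.symm

/-- The quadratic form of the Gram matrix `(s - λ) I + λ J` of the indicator vectors of `F`. -/
theorem gram_form {α : Type*} [DecidableEq α] (s lam : ℕ) (F : Finset (Finset α))
    (huniform : ∀ A ∈ F, A.card = s)
    (hlam : ∀ A ∈ F, ∀ B ∈ F, A ≠ B → (A ∩ B).card = lam) (w : Finset α → ℤ) :
    ∑ y ∈ F.biUnion id, (∑ A ∈ F, if y ∈ A then w A else 0) ^ 2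
      = ((s : ℤ) - lam) * ∑ A ∈ F, w A ^ 2 + lam * (∑ A ∈ F, w A) ^ 2 := by
  have h1 : ∀ A ∈ F, ∀ B ∈ F,
      ∑ y ∈ F.biUnion id, (if y ∈ A then w A else 0) * (if y ∈ B then w B else 0)
        = (if A = B then ((s : ℤ) - lam) * (w A * w B) else 0) + lam * (w A * w B) := by
    intro A hA B hB
    have h2 : ∀ y, (if y ∈ A then w A else 0) * (if y ∈ B then w B else 0)
        = if y ∈ A ∩ B then w A * w B else 0 := by
      intro y
      by_cases h : y ∈ A <;> by_cases h' : y ∈ B <;> simp [h, h']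
    simp only [h2]
    have h3 : F.biUnion id ∩ (A ∩ B) = A ∩ B := by
      rw [Finset.inter_eq_right]
      intro y hy
      exact Finset.mem_biUnion.2 ⟨A, hA, (Finset.mem_inter.1 hy).1⟩
    rw [Finset.sum_ite_mem, h3, Finset.sum_const, nsmul_eq_mul]
    by_cases h : A = B
    · subst h
      simp [huniform A hA]
      ring
    · simp [h, hlam A hA B hB h]
  simp only [sq (Finset.sum _ _), Finset.sum_mul_sum]
  rw [Finset.sum_comm]
  have h4 : ∀ A ∈ F, ∑ y ∈ F.biUnion id, ∑ B ∈ F,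
      (if y ∈ A then w A else 0) * (if y ∈ B then w B else 0)
      = ((s : ℤ) - lam) * w A ^ 2 + ∑ B ∈ F, lam * (w A * w B) := by
    intro A hA
    rw [Finset.sum_comm, Finset.sum_congr rfl (h1 A hA), Finset.sum_add_distrib,
      Finset.sum_ite_eq, if_pos hA, sq]
  rw [Finset.sum_congr rfl h4, Finset.sum_add_distrib]
  simp only [Finset.mul_sum]

theorem deg_mul_le {α : Type*} [DecidableEq α] (s lam : ℕ) (F : Finset (Finset α))
    (huniform : ∀ A ∈ F, A.card = s)
    (hlam : ∀ A ∈ F, ∀ B ∈ F, A ≠ B → (A ∩ B).card = lam)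
    (x : α) (h0 : 0 < deg F x) (h1 : deg F x < F.card) :
    (deg F x : ℤ) * (F.card - deg F x) ≤ ((s : ℤ) - lam) * F.card := by
  have hg := gram_form s lam F huniform hlam
    (fun A => if x ∈ A then (F.card : ℤ) - deg F x else - deg F x)
  have hc : ((F.filter (fun A => x ∉ A)).card : ℤ) = F.card - deg F x := by
    have := Finset.card_filter_add_card_filter_not (s := F) (fun A => x ∈ A)
    unfold deg
    omega
  have hd : ((F.filter (fun A => x ∈ A)).card : ℤ) = deg F x := rfl
  have e1 : ∑ A ∈ F, (if x ∈ A then (F.card : ℤ) - deg F x else - deg F x) = 0 := by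
    rw [Finset.sum_ite, Finset.sum_const, Finset.sum_const, nsmul_eq_mul, nsmul_eq_mul, hc, hd]
    ring
  have e2 : ∑ A ∈ F, (if x ∈ A then (F.card : ℤ) - deg F x else - deg F x) ^ 2
      = deg F x * (F.card - deg F x) * F.card := by
    simp only [ite_pow]
    rw [Finset.sum_ite, Finset.sum_const, Finset.sum_const, nsmul_eq_mul, nsmul_eq_mul, hc, hd]
    ring
  rw [e1, e2] at hg
  have hx : x ∈ F.biUnion id := by
    obtain ⟨A, hA⟩ := Finset.card_pos.1 h0
    rw [Finset.mem_filter] at hA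
    exact Finset.mem_biUnion.2 ⟨A, hA.1, hA.2⟩
  have e3 : (∑ A ∈ F, if x ∈ A then
      (if x ∈ A then (F.card : ℤ) - deg F x else - deg F x) else 0)
      = deg F x * (F.card - deg F x) := by
    rw [← Finset.sum_filter, Finset.sum_congr rfl (g := fun _ => (F.card : ℤ) - deg F x)]
    · rw [Finset.sum_const, nsmul_eq_mul, hd]
    · intro A hA
      rw [if_pos (Finset.mem_filter.1 hA).2]
  have h4 := Finset.single_le_sum (f := fun y => (∑ A ∈ F, if y ∈ A then
      (if x ∈ A then (F.card : ℤ) - deg F x else - deg F x) else 0) ^ 2)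
    (fun y _ => sq_nonneg _) hx
  rw [e3, hg] at h4
  have hpos : 0 < (deg F x : ℤ) * (F.card - deg F x) := by
    apply mul_pos <;> omega
  refine le_of_mul_le_mul_left ?_ hpos
  nlinarith [h4]

/-- A set of size `λ` contained in every member is the common intersection. -/
theorem core_of_subset {α : Type*} [DecidableEq α] (lam : ℕ) (F : Finset (Finset α))
    (hlam : ∀ A ∈ F, ∀ B ∈ F, A ≠ B → (A ∩ B).card = lam)
    (C : Finset α) (hC : C.card = lam) (hsub : ∀ A ∈ F, C ⊆ A) :
    ∀ A ∈ F, ∀ B ∈ F, A ≠ B → A ∩ B = C := by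
  intro A hA B hB hAB
  refine (Finset.eq_of_subset_of_card_le
    (Finset.subset_inter (hsub A hA) (hsub B hB)) ?_).symm
  rw [hlam A hA B hB hAB, hC]

theorem case_one {α : Type*} [DecidableEq α] (s : ℕ) (F : Finset (Finset α))
    (huniform : ∀ A ∈ F, A.card = s)
    (hlam : ∀ A ∈ F, ∀ B ∈ F, A ≠ B → (A ∩ B).card = 1)
    (hcard : s * s + 2 ≤ F.card + s) (A : Finset α) (hA : A ∈ F) :
    ∃ C : Finset α, ∀ A ∈ F, ∀ B ∈ F, A ≠ B → A ∩ B = C := by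
  have hsum := sum_deg s 1 F huniform hlam A hA
  obtain ⟨x, hxA, hx⟩ : ∃ x ∈ A, s < deg F x := by
    by_contra! h
    have := Finset.sum_le_card_nsmul A _ s h
    rw [huniform A hA, hsum, smul_eq_mul] at this
    omega
  refine ⟨{x}, core_of_subset 1 F hlam {x} (by simp) fun B hB => ?_⟩
  rw [Finset.singleton_subset_iff]
  by_contra hxB
  have hne : ∀ D ∈ F.filter (fun D => x ∈ D), ∃ y, y ∈ D ∩ B := by
    intro D hD
    rw [Finset.mem_filter] at hD
    have : (D ∩ B).card = 1 := hlam D hD.1 B hB (fun h => hxB (h ▸ hD.2))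
    exact Finset.card_pos.1 (by omega)
  haveI : Nonempty α := ⟨x⟩
  choose! f hf using hne
  obtain ⟨D, hD, E, hE, hDE, hfe⟩ := Finset.exists_ne_map_eq_of_card_lt_of_maps_to
    (s := F.filter (fun D => x ∈ D)) (t := B) (f := f)
    (by rw [huniform B hB]; exact hx)
    (fun D hD => (Finset.mem_inter.1 (hf D hD)).2)
  have h1 := Finset.mem_inter.1 (hf D hD)
  have h2 := Finset.mem_inter.1 (hf E hE)
  rw [Finset.mem_filter] at hD hE
  have h3 := Finset.card_le_one.1 (hlam D hD.1 E hE.1 hDE).le x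
    (Finset.mem_inter.2 ⟨hD.2, hE.2⟩) (f D) (Finset.mem_inter.2 ⟨h1.1, hfe ▸ h2.1⟩)
  exact hxB (h3 ▸ h1.2)

theorem case_two {α : Type*} [DecidableEq α] (k lam : ℕ) (F : Finset (Finset α))
    (huniform : ∀ A ∈ F, A.card = k + lam) (hk : 1 ≤ k) (hl : 2 ≤ lam)
    (hlam : ∀ A ∈ F, ∀ B ∈ F, A ≠ B → (A ∩ B).card = lam)
    (hcard : (k + lam) * (k + lam) + 2 ≤ F.card + (k + lam)) :
    ∃ C : Finset α, ∀ A ∈ F, ∀ B ∈ F, A ≠ B → A ∩ B = C := by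
  have hm1 : (k + 1) * (k + 1) < F.card := by nlinarith
  have hm2 : (lam + 1) * k + 2 ≤ F.card := by nlinarith
  have hdeg_le : ∀ x, deg F x ≤ F.card := fun x => Finset.card_filter_le _ _
  have hdich : ∀ x, deg F x ≤ k ∨ F.card ≤ deg F x + k := by
    intro x
    by_contra! h
    have := deg_mul_le (k + lam) lam F huniform hlam x (by omega) (by omega)
    push_cast at this
    have a1 : (k : ℤ) + 1 ≤ deg F x := by omega
    have a2 : (deg F x : ℤ) + k + 1 ≤ F.card := by omega
    have a3 : ((k : ℤ) + 1) * (k + 1) < F.card := by exact_mod_cast hm1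
    -- `(d - (k + 1)) * (m - d - (k + 1)) ≥ 0` says `d (m - d) ≥ (k + 1) (m - k - 1) > k m`.
    nlinarith [mul_nonneg (sub_nonneg.2 a1) (sub_nonneg.2 a2)]
  set C := (F.biUnion id).filter (fun x => F.card ≤ deg F x + k) with hCdef
  have hCcard : C.card ≤ lam := by
    by_contra! h
    obtain ⟨T, hTC, hT⟩ := Finset.exists_subset_card_eq (Nat.succ_le_of_lt h)
    -- Each point of `T` is missed by at most `k` members, so few members fail to contain `T`.
    have hbad : (T.biUnion fun x => F.filter (fun A => x ∉ A)).card ≤ T.card * k := by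
      refine Finset.card_biUnion_le_card_mul _ _ _ fun x hx => ?_
      have h1 := (Finset.mem_filter.1 (hTC hx)).2
      have h2 := Finset.card_filter_add_card_filter_not (s := F) (fun A => x ∈ A)
      unfold deg at h1
      omega
    have hgood := Finset.le_card_sdiff (T.biUnion fun x => F.filter (fun A => x ∉ A)) F
    rw [hT] at hbad
    have h3 : 1 < (F \ T.biUnion fun x => F.filter (fun A => x ∉ A)).card := by
      rw [Nat.succ_eq_add_one] at hbad
      omega
    obtain ⟨A, hA, B, hB, hAB⟩ := Finset.one_lt_card.1 h3
    have key : ∀ D ∈ F \ T.biUnion (fun x => F.filter (fun A => x ∉ A)), D ∈ F ∧ T ⊆ D := by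
      intro D hD
      rw [Finset.mem_sdiff] at hD
      refine ⟨hD.1, fun x hx => ?_⟩
      by_contra hxD
      exact hD.2 (Finset.mem_biUnion.2 ⟨x, hx, Finset.mem_filter.2 ⟨hD.1, hxD⟩⟩)
    have h4 := Finset.card_le_card
      (Finset.subset_inter (key A hA).2 (key B hB).2)
    rw [hlam A (key A hA).1 B (key B hB).1 hAB, hT] at h4
    omega
  have hmany : ∀ A ∈ F, lam ≤ (A ∩ C).card := by
    intro A hA
    by_contra! h
    have hsum := sum_deg (k + lam) lam F huniform hlam A hA
    rw [← Finset.sum_inter_add_sum_sdiff A C] at hsum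
    have h1 := Finset.sum_le_card_nsmul (A ∩ C) (deg F) F.card fun x _ => hdeg_le x
    have h2 := Finset.sum_le_card_nsmul (A \ C) (deg F) k fun x hx => by
      rw [Finset.mem_sdiff] at hx
      rcases hdich x with h | h
      · exact h
      · exact (hx.2 (Finset.mem_filter.2 ⟨Finset.mem_biUnion.2 ⟨A, hA, hx.1⟩, h⟩)).elim
    have h3 := Finset.card_inter_add_card_sdiff A C
    rw [huniform A hA] at h3
    rw [smul_eq_mul] at h1 h2
    obtain ⟨M, hM⟩ : ∃ M, F.card = M + 1 := ⟨F.card - 1, by omega⟩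
    rw [hM] at h1 hsum hm1
    rw [Nat.add_sub_cancel] at hsum
    obtain ⟨e, he⟩ : ∃ e, lam = (A ∩ C).card + 1 + e := ⟨lam - ((A ∩ C).card + 1), by omega⟩
    have h4 : (A \ C).card = k + 1 + e := by omega
    rw [h4] at h2
    generalize (A ∩ C).card = c at *
    subst he
    -- The count gives `(1 + e) M ≤ k ^ 2 - 1 + e (k - 1)`, against `M ≥ (k + 1) ^ 2`.
    have hMk : k ≤ M := by nlinarith
    nlinarith [Nat.mul_le_mul_left e hMk]
  have hall : ∀ A ∈ F, A ∩ C = C := fun A hA =>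
    Finset.eq_of_subset_of_card_le Finset.inter_subset_right (hCcard.trans (hmany A hA))
  obtain ⟨A, hA⟩ : F.Nonempty := Finset.card_pos.1 (by omega)
  refine ⟨C, core_of_subset lam F hlam C ?_ fun B hB => Finset.inter_eq_right.1 (hall B hB)⟩
  have := hmany A hA
  rw [hall A hA] at this
  omega

theorem stmt5 {α : Type*} [DecidableEq α] (s lam : ℕ) (F : Finset (Finset α))
    (huniform : ∀ A ∈ F, A.card = s)
    (hlam : ∀ A ∈ F, ∀ B ∈ F, A ≠ B → (A ∩ B).card = lam)
    (hcard : s ^ 2 - s + 2 ≤ F.card) :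
    ∃ C : Finset α, ∀ A ∈ F, ∀ B ∈ F, A ≠ B → A ∩ B = C := by
  obtain ⟨A, hA, B, hB, hAB⟩ := Finset.one_lt_card.1 (show 1 < F.card by omega)
  have hlt : lam < s := by
    rw [← hlam A hA B hB hAB, ← huniform A hA]
    refine Finset.card_lt_card (Finset.inter_subset_left.ssubset_of_ne fun h => hAB ?_)
    exact Finset.eq_of_subset_of_card_le (Finset.inter_eq_left.1 h)
      (by rw [huniform A hA, huniform B hB])
  have hcard' : s * s + 2 ≤ F.card + s := by
    rw [sq] at hcard
    omega
  rcases Nat.lt_or_ge lam 2 with h | h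
  · interval_cases lam
    · exact ⟨∅, fun A hA B hB hAB => Finset.card_eq_zero.1 (hlam A hA B hB hAB)⟩
    · exact case_one s F huniform hlam hcard' A hA
  · obtain ⟨k, rfl⟩ : ∃ k, s = k + lam := ⟨s - lam, by omega⟩
    exact case_two k lam F huniform (by omega) h hlam hcard'
end

section
/- Let λ ∈ ℕ, let F be a sunflower of finite sets with core C, and let X be a finite set such that |X ∩ A| ≥ λ for every A ∈ F. If |F| > |X|, then λ ≤ |C| and |X ∩ C| ≥ λ. -/
/-!
The petals `A \ C` are pairwise disjoint and there are more of them than elements of `X`, so by the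
pigeonhole principle some petal misses `X`. For that `A`, `X ∩ A ⊆ X ∩ C`, and both bounds follow.
-/

theorem stmt6 {α : Type*} [DecidableEq α] (lam : ℕ) (F : Finset (Finset α))
    (C : Finset α)
    (hsun : ∀ A ∈ F, ∀ B ∈ F, A ≠ B → A ∩ B = C)
    (X : Finset α)
    (hX : ∀ A ∈ F, lam ≤ (X ∩ A).card)
    (hcard : X.card < F.card) :
    lam ≤ C.card ∧ lam ≤ (X ∩ C).card := by
  have key : ∃ A ∈ F, X ∩ A ⊆ C := by
    by_contra! h
    have h' : ∀ A ∈ F, ∃ x, x ∈ X ∩ A ∧ x ∉ C := fun A hA => Finset.not_subset.mp (h A hA)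
    obtain ⟨A₀, hA₀⟩ : F.Nonempty := Finset.card_pos.mp (Nat.zero_lt_of_lt hcard)
    haveI : Nonempty α := ⟨(h' A₀ hA₀).choose⟩
    choose! f hf using h'
    obtain ⟨A, hA, B, hB, hne, hfe⟩ := Finset.exists_ne_map_eq_of_card_lt_of_maps_to hcard
      (f := f) (fun A hA => (Finset.mem_inter.mp (hf A hA).1).1)
    -- A common point of two distinct members lies in the core.
    apply (hf A hA).2
    rw [← hsun A hA B hB hne]
    refine Finset.mem_inter.mpr ⟨(Finset.mem_inter.mp (hf A hA).1).2, ?_⟩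
    rw [hfe]
    exact (Finset.mem_inter.mp (hf B hB).1).2
  obtain ⟨A, hA, hAC⟩ := key
  exact ⟨(hX A hA).trans (Finset.card_le_card hAC),
    (hX A hA).trans (Finset.card_le_card (Finset.subset_inter Finset.inter_subset_left hAC))⟩
end

section
/- Let α ≥ 1 and let S be a binary matrix with pairwise distinct rows that contains the all-zero vector as a row, such that every pairwise row Hamming distance lies in {α, α+1}. Then every nonzero row has weight α or α+1, and for any two distinct nonzero rows i and j: if both have weight α then |W_i ∩ W_j| = ⌊α/2⌋; if both have weight α+1 then |W_i ∩ W_j| = ⌈(α+1)/2⌉; and if one has weight α and the other weight α+1 then |W_i ∩ W_j| = ⌊(α+1)/2⌋. -/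
/-- The symmetric difference of two supports has `|W_i| + |W_j| - 2 |W_i ∩ W_j|` elements; stated
additively to avoid truncated subtraction. -/
lemma hammingDist_add_two_mul_card_inter {n d : ℕ} (S : Fin n → Fin d → Bool) (i j : Fin n) :
    hammingDist (S i) (S j) + 2 * (rowSupport S i ∩ rowSupport S j).card =
      (rowSupport S i).card + (rowSupport S j).card := by
  have hinter : rowSupport S i ∩ rowSupport S j =
      Finset.univ.filter fun c => S i c = true ∧ S j c = true := by
    ext c
    simp [rowSupport]
  rw [hinter]
  simp only [hammingDist, rowSupport, Finset.card_filter, Finset.mul_sum,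
    ← Finset.sum_add_distrib]
  refine Finset.sum_congr rfl fun c _ => ?_
  cases S i c <;> cases S j c <;> simp

theorem stmt7 {n d : ℕ} (α : ℕ) (hα : 1 ≤ α)
    (S : Fin n → Fin d → Bool)
    (hrows : ∀ i j : Fin n, i ≠ j → S i ≠ S j)
    (i₀ : Fin n) (hzero : ∀ c, S i₀ c = false)
    (hham : ∀ i j : Fin n, i ≠ j →
      hammingDist (S i) (S j) = α ∨ hammingDist (S i) (S j) = α + 1) :
    (∀ i : Fin n, i ≠ i₀ →
      (rowSupport S i).card = α ∨ (rowSupport S i).card = α + 1) ∧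
    (∀ i j : Fin n, i ≠ j → i ≠ i₀ → j ≠ i₀ →
      ((rowSupport S i).card = α → (rowSupport S j).card = α →
        (rowSupport S i ∩ rowSupport S j).card = α / 2) ∧
      ((rowSupport S i).card = α + 1 → (rowSupport S j).card = α + 1 →
        (rowSupport S i ∩ rowSupport S j).card = (α + 2) / 2) ∧
      ((rowSupport S i).card = α → (rowSupport S j).card = α + 1 →
        (rowSupport S i ∩ rowSupport S j).card = (α + 1) / 2)) := by
  have hempty : (rowSupport S i₀).card = 0 := by
    simp [rowSupport, hzero]
  refine ⟨fun i hi => ?_, fun i j hij _ _ => ?_⟩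
  · have hdist := hammingDist_add_two_mul_card_inter S i i₀
    have hinter : (rowSupport S i ∩ rowSupport S i₀).card ≤ (rowSupport S i₀).card :=
      Finset.card_le_card Finset.inter_subset_right
    have := hham i i₀ hi
    omega
  · have hdist := hammingDist_add_two_mul_card_inter S i j
    have := hham i j hij
    refine ⟨?_, ?_, ?_⟩ <;> intros <;> omega
end

section
/- Let U = {1, …, m} be a finite universe, let C_1, …, C_n be subsets of U, and let k be a natural number. Define the matrix S with n+1 rows and m columns over the alphabet {0, 1, …, n} by S i j = i if j ∈ C_i and S i j = 0 otherwise, for i ∈ {1, …, n}, and with row n+1 equal to the all-zero vector. Then there exists a set K ⊆ U with |K| ≤ k and K ∩ C_i ≠ ∅ for every i ∈ {1, …, n} if and only if S has a distinguishing set of size at most k. -/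
theorem stmt15 {m n : ℕ} (C : Fin n → Finset (Fin m)) (k : ℕ)
    (S : Fin (n + 1) → Fin m → Fin (n + 1))
    (hS : ∀ (i : Fin n) (j : Fin m), S i.castSucc j = if j ∈ C i then i.succ else 0)
    (hlast : ∀ j : Fin m, S (Fin.last n) j = 0) :
    (∃ K : Finset (Fin m), K.card ≤ k ∧ ∀ i : Fin n, (K ∩ C i).Nonempty) ↔
    (∃ K : Finset (Fin m), K.card ≤ k ∧ Distinguishes S K) := by
  refine exists_congr fun K => and_congr_right fun _ => ⟨fun h i j hij => ?_, fun h i => ?_⟩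
  · induction i using Fin.lastCases with
    | last =>
      induction j using Fin.lastCases with
      | last => exact absurd rfl hij
      | cast j =>
        obtain ⟨c, hc⟩ := h j
        rw [Finset.mem_inter] at hc
        refine ⟨c, hc.1, ?_⟩
        rw [hlast, hS, if_pos hc.2]
        exact (Fin.succ_ne_zero j).symm
    | cast i =>
      obtain ⟨c, hc⟩ := h i
      rw [Finset.mem_inter] at hc
      refine ⟨c, hc.1, ?_⟩
      rw [hS, if_pos hc.2]
      induction j using Fin.lastCases with
      | last =>
        rw [hlast]
        exact Fin.succ_ne_zero i
      | cast j =>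
        rw [hS]
        split_ifs
        · intro e
          exact hij (congrArg Fin.castSucc (Fin.succ_injective n e))
        · exact Fin.succ_ne_zero i
  · obtain ⟨c, hcK, hc⟩ := h i.castSucc (Fin.last n) (Fin.castSucc_lt_last i).ne
    rw [hS, hlast] at hc
    exact ⟨c, Finset.mem_inter.2 ⟨hcK, by_contra fun hn => hc (if_neg hn)⟩⟩
end

section
/- Let S be a matrix over an alphabet Σ with n pairwise distinct rows and d columns, let H be the maximum pairwise row Hamming distance of S, and for distinct rows i, j let D_{ij} be the set of columns in which rows i and j differ (so each D_{ij} is nonempty and |D_{ij}| ≤ H). Let P be a subfamily of the family {D_{ij} : i ≠ j} whose members are pairwise disjoint and which is maximal with this property. Then the union X of the members of P is a distinguishing set for S with |X| ≤ H · |P|, and every distinguishing set for S has size at least |P|; in particular, |X| is at most H times the minimum size of a distinguishing set for S. -/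
/-- The set of columns in which rows `i` and `j` of `S` differ. -/
def diffCols {n d : ℕ} {Sigma : Type*} [DecidableEq Sigma]
    (S : Fin n → Fin d → Sigma) (i j : Fin n) : Finset (Fin d) :=
  Finset.univ.filter fun c => S i c ≠ S j c

theorem stmt18 {n d : ℕ} {Sigma : Type*} [DecidableEq Sigma]
    (S : Fin n → Fin d → Sigma)
    (hrows : ∀ i j : Fin n, i ≠ j → S i ≠ S j)
    (H : ℕ)
    (hmax : IsGreatest {h : ℕ | ∃ i j : Fin n, i ≠ j ∧ h = (diffCols S i j).card} H)
    (P : Finset (Finset (Fin d)))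
    (hPfam : ∀ A ∈ P, ∃ i j : Fin n, i ≠ j ∧ A = diffCols S i j)
    (hPdisj : ∀ A ∈ P, ∀ B ∈ P, A ≠ B → Disjoint A B)
    (hPmax : ∀ Q : Finset (Finset (Fin d)), P ⊆ Q →
      (∀ A ∈ Q, ∃ i j : Fin n, i ≠ j ∧ A = diffCols S i j) →
      (∀ A ∈ Q, ∀ B ∈ Q, A ≠ B → Disjoint A B) → Q = P) :
    Distinguishes S (P.biUnion id) ∧
    (P.biUnion id).card ≤ H * P.card ∧
    (∀ K : Finset (Fin d), Distinguishes S K → P.card ≤ K.card) ∧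
    (∀ K : Finset (Fin d), Distinguishes S K → (P.biUnion id).card ≤ H * K.card) := by
  have hX : Distinguishes S (P.biUnion id) := by
    intro i j hij
    by_contra! hcon
    have hdisj : ∀ A ∈ P, Disjoint A (diffCols S i j) := by
      intro A hA
      rw [Finset.disjoint_left]
      intro c hcA hc
      exact (Finset.mem_filter.mp hc).2 (hcon c (Finset.mem_biUnion.mpr ⟨A, hA, hcA⟩))
    have hQ := hPmax (insert (diffCols S i j) P) (Finset.subset_insert _ _)
      (by
        intro A hA
        rcases Finset.mem_insert.mp hA with rfl | hA
        · exact ⟨i, j, hij, rfl⟩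
        · exact hPfam A hA)
      (by
        intro A hA B hB hAB
        rcases Finset.mem_insert.mp hA with rfl | hA <;>
          rcases Finset.mem_insert.mp hB with rfl | hB
        · exact absurd rfl hAB
        · exact (hdisj B hB).symm
        · exact hdisj A hA
        · exact hPdisj A hA B hB hAB)
    have hmem : diffCols S i j ∈ P := hQ ▸ Finset.mem_insert_self _ _
    -- `D i j` is now disjoint from itself, hence empty, so rows `i` and `j` coincide.
    have hself := Finset.disjoint_left.mp (hdisj _ hmem)
    refine hrows i j hij (funext fun c => ?_)
    by_contra hc
    have hcD : c ∈ diffCols S i j := Finset.mem_filter.mpr ⟨Finset.mem_univ c, hc⟩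
    exact hself hcD hcD
  have hcard : (P.biUnion id).card ≤ H * P.card := by
    rw [mul_comm]
    refine Finset.card_biUnion_le_card_mul P id H fun A hA => ?_
    obtain ⟨i, j, hij, rfl⟩ := hPfam A hA
    exact hmax.2 ⟨i, j, hij, rfl⟩
  have hlow : ∀ K : Finset (Fin d), Distinguishes S K → P.card ≤ K.card := by
    intro K hK
    have hmeet : ∀ A ∈ P, ∃ c ∈ K, c ∈ A := by
      intro A hA
      obtain ⟨i, j, hij, rfl⟩ := hPfam A hA
      obtain ⟨c, hcK, hc⟩ := hK i j hij
      exact ⟨c, hcK, Finset.mem_filter.mpr ⟨Finset.mem_univ c, hc⟩⟩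
    -- By disjointness, a point of `K` lies in at most one member of `P`.
    refine Finset.card_le_card_of_forall_subsingleton (fun A c => c ∈ A) hmeet ?_
    rintro c - A ⟨hA, hcA⟩ B ⟨hB, hcB⟩
    by_contra hne
    exact Finset.disjoint_left.mp (hPdisj A hA B hB hne) hcA hcB
  exact ⟨hX, hcard, hlow, fun K hK => hcard.trans (Nat.mul_le_mul_left H (hlow K hK))⟩
end
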